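/- Let {π_α : α ∈ A} be a family of Borel maps from Ω ⊂ ℝⁿ to a metric measure space (X, h) with h(B(x,δ)) ≳ δ^m, indexed by a probability space (A, ψ), such that (p, α) ↦ π_α(p) is continuous, and suppose the family is m-transversal: ψ{α : dist(π_α x, π_α y) ≤ δ|x-y|} ≤ c δ^m for all distinct x,y ∈ Ω and δ ≤ δ₀. If E ⊂ Ω is a Borel set supporting a probability measure μ with finite τ-energy I_τ(μ) < ∞ for some τ < m, then for ψ-almost every α, the pushforward (π_α)_♯μ has finite τ-energy; consequently the Hausdorff dimension of π_α(E) is at least τ for ψ-a.e. α. -/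

import Mathlib

open MeasureTheory Metric Set ENNReal

/-- The `τ`-energy of a measure. -/
noncomputable def sEnergy {X : Type*} [EMetricSpace X] [MeasurableSpace X]
    (s : ℝ) (μ : Measure X) : ℝ≥0∞ :=
  ∫⁻ x, ∫⁻ y, (edist x y) ^ (-s) ∂μ ∂μ

/-!
Transversality is a weak-type bound: for fixed `x ≠ y`, the function
`α ↦ dist x y / dist (π α x) (π α y)` lies in weak `L^m(ψ)`, hence in `L^τ(ψ)` for `τ < m`, with a
bound uniform in `x` and `y`. Integrating against `μ × μ` and exchanging the order of integration
bounds the `ψ`-average of the energies of the projections by a multiple of the energy of `μ`.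

Nothing makes `α ↦ dist (π α x) (π α y)` measurable, and the Lebesgue integral `∫⁻` of a
nonmeasurable function is a lower integral, too small to control the function almost everywhere.
Averages over the parameter are therefore upper integrals. The inequality of Tonelli's theorem
that is needed survives because the integrand is continuous in `(x, y)`: the inner integral can be
replaced by countable sums over nodes in the cells of a fine partition, and in each cell the node
can be chosen so as not to overestimate the outer integral.
-/

open Filter Topology

section UpperLIntegral

variable {α : Type*} [MeasurableSpace α] {μ : Measure α} {f g : α → ℝ≥0∞}

/-- The upper Lebesgue integral of a function that need not be measurable: the infimum of the
integrals of its measurable majorants. -/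
noncomputable def upperLIntegral (μ : Measure α) (f : α → ℝ≥0∞) : ℝ≥0∞ :=
  ⨅ g : {g : α → ℝ≥0∞ // Measurable g ∧ f ≤ g}, ∫⁻ a, g.1 a ∂μ

theorem exists_measurable_ge_lintegral_eq_upperLIntegral (μ : Measure α) (f : α → ℝ≥0∞) :
    ∃ g, Measurable g ∧ f ≤ g ∧ ∫⁻ a, g a ∂μ = upperLIntegral μ f := by
  have : Nonempty {g : α → ℝ≥0∞ // Measurable g ∧ f ≤ g} := ⟨⊤, measurable_const, le_top⟩
  obtain ⟨u, -, hu_lim, hu_mem⟩ := exists_seq_tendsto_sInf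
    (range_nonempty fun g : {g : α → ℝ≥0∞ // Measurable g ∧ f ≤ g} => ∫⁻ a, g.1 a ∂μ)
    (OrderBot.bddBelow _)
  choose G hG using hu_mem
  have hmeas : Measurable fun a => ⨅ n, (G n).1 a := .iInf fun n => (G n).2.1
  have hle : f ≤ fun a => ⨅ n, (G n).1 a := fun a => le_iInf fun n => (G n).2.2 a
  refine ⟨_, hmeas, hle, le_antisymm ?_ (iInf_le_of_le ⟨_, hmeas, hle⟩ le_rfl)⟩
  refine ge_of_tendsto' hu_lim fun n => ?_
  rw [← hG n]
  exact lintegral_mono fun a => iInf_le _ n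

theorem upperLIntegral_le_lintegral_of_ae_le (hg : Measurable g) (hfg : f ≤ᵐ[μ] g) :
    upperLIntegral μ f ≤ ∫⁻ a, g a ∂μ := by
  let N : Set α := toMeasurable μ {a | ¬ f a ≤ g a}
  have hN : μ N = 0 := (measure_toMeasurable _).trans hfg
  have hmeas : Measurable fun a => g a + N.indicator ⊤ a :=
    hg.add (measurable_const.indicator (measurableSet_toMeasurable _ _))
  have hle : f ≤ fun a => g a + N.indicator ⊤ a := by
    intro a
    by_cases ha : a ∈ N
    · simp [indicator_of_mem ha]
    · simpa [indicator_of_notMem ha] using notMem_subset (subset_toMeasurable _ _) ha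
  calc upperLIntegral μ f ≤ ∫⁻ a, g a + N.indicator ⊤ a ∂μ :=
        iInf_le_of_le ⟨_, hmeas, hle⟩ le_rfl
    _ = ∫⁻ a, g a ∂μ := by
        refine lintegral_congr_ae ?_
        filter_upwards [indicator_meas_zero (f := (⊤ : α → ℝ≥0∞)) hN] with a ha
        rw [ha, Pi.zero_apply, add_zero]

theorem upperLIntegral_le_lintegral (hg : Measurable g) (hfg : f ≤ g) :
    upperLIntegral μ f ≤ ∫⁻ a, g a ∂μ :=
  iInf_le_of_le ⟨g, hg, hfg⟩ le_rfl

theorem upperLIntegral_mono (hfg : f ≤ g) : upperLIntegral μ f ≤ upperLIntegral μ g := by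
  obtain ⟨G, hG, hgG, hG_eq⟩ := exists_measurable_ge_lintegral_eq_upperLIntegral μ g
  exact hG_eq ▸ upperLIntegral_le_lintegral hG (hfg.trans hgG)

theorem ae_lt_top_of_upperLIntegral_ne_top (h : upperLIntegral μ f ≠ ⊤) :
    ∀ᵐ a ∂μ, f a < ⊤ := by
  obtain ⟨g, hg, hfg, hg_eq⟩ := exists_measurable_ge_lintegral_eq_upperLIntegral μ f
  filter_upwards [ae_lt_top hg (hg_eq ▸ h)] with a ha using (hfg a).trans_lt ha

theorem upperLIntegral_const_mul_le (c : ℝ≥0∞) (f : α → ℝ≥0∞) :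
    upperLIntegral μ (fun a => c * f a) ≤ c * upperLIntegral μ f := by
  obtain ⟨g, hg, hfg, hg_eq⟩ := exists_measurable_ge_lintegral_eq_upperLIntegral μ f
  rw [← hg_eq, ← lintegral_const_mul c hg]
  exact upperLIntegral_le_lintegral (hg.const_mul c) fun a => mul_le_mul_right (hfg a) c

theorem upperLIntegral_liminf_le (f : ℕ → α → ℝ≥0∞) :
    upperLIntegral μ (fun a => liminf (fun n => f n a) atTop) ≤
      liminf (fun n => upperLIntegral μ (f n)) atTop := by
  choose g hg hfg hg_eq using fun n => exists_measurable_ge_lintegral_eq_upperLIntegral μ (f n)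
  simp only [← hg_eq]
  refine (upperLIntegral_le_lintegral (.liminf hg) fun a => ?_).trans (lintegral_liminf_le hg)
  exact liminf_le_liminf (Eventually.of_forall fun n => hfg n a)

theorem upperLIntegral_lintegral_le_of_countable {ι : Type*} [MeasurableSpace ι] [Countable ι]
    [MeasurableSingletonClass ι] (μ : Measure α) (κ : Measure ι) (F : α → ι → ℝ≥0∞) :
    upperLIntegral μ (fun a => ∫⁻ i, F a i ∂κ) ≤ ∫⁻ i, upperLIntegral μ (F · i) ∂κ := by
  choose G hG hFG hG_eq using
    fun i => exists_measurable_ge_lintegral_eq_upperLIntegral μ (F · i)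
  have hG_mul : ∀ i, Measurable fun a => G i a * κ {i} := fun i => (hG i).mul_const _
  calc upperLIntegral μ (fun a => ∫⁻ i, F a i ∂κ)
      ≤ ∫⁻ a, ∑' i, G i a * κ {i} ∂μ := by
        refine upperLIntegral_le_lintegral (.tsum hG_mul) fun a => ?_
        dsimp only
        rw [lintegral_countable']
        exact ENNReal.tsum_le_tsum fun i => mul_le_mul_left (hFG i a) _
    _ = ∫⁻ i, upperLIntegral μ (F · i) ∂κ := by
        rw [lintegral_tsum fun i => (hG_mul i).aemeasurable, lintegral_countable']
        simp only [lintegral_mul_const _ (hG _), hG_eq]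

theorem rpow_le_one_add_tsum_indicator_dyadic {τ : ℝ} (hτ : 0 ≤ τ) (u : ℝ≥0∞) :
    u ^ τ ≤ 1 + ∑' j : ℕ, {v : ℝ≥0∞ | 2 ^ j ≤ v}.indicator (fun _ => (2 ^ (j + 1)) ^ τ) u := by
  have h_term : ∀ j : ℕ, 2 ^ j ≤ u → ((2 : ℝ≥0∞) ^ (j + 1)) ^ τ ≤
      {v : ℝ≥0∞ | 2 ^ j ≤ v}.indicator (fun _ => (2 ^ (j + 1)) ^ τ) u := fun j hj =>
    (indicator_of_mem (s := {v : ℝ≥0∞ | 2 ^ j ≤ v}) hj fun _ => (2 ^ (j + 1)) ^ τ).ge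
  rcases eq_or_ne u ⊤ with rfl | hu_top
  · suffices h_sum : ∑' j : ℕ, {v : ℝ≥0∞ | 2 ^ j ≤ v}.indicator
        (fun _ => ((2 : ℝ≥0∞) ^ (j + 1)) ^ τ) ⊤ = ⊤ by
      rw [h_sum, add_top]
      exact le_top
    refine top_le_iff.1 ((tsum_const_eq_top_of_ne_zero (α := ℕ) one_ne_zero).ge.trans ?_)
    exact ENNReal.tsum_le_tsum fun j =>
      ((one_rpow τ).ge.trans (rpow_le_rpow (one_le_pow₀ one_le_two) hτ)).trans (h_term j le_top)
  rcases le_total u 1 with hu_le | hu_ge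
  · exact (rpow_le_one hu_le hτ).trans le_self_add
  · lift u to NNReal using hu_top
    obtain ⟨j, hj_le, hj_lt⟩ := exists_nat_pow_near (mod_cast hu_ge : 1 ≤ u) one_lt_two
    calc (u : ℝ≥0∞) ^ τ ≤ (2 ^ (j + 1)) ^ τ := by
          gcongr
          exact_mod_cast hj_lt.le
      _ ≤ _ := h_term j (mod_cast hj_le)
      _ ≤ _ := ENNReal.le_tsum j
      _ ≤ _ := le_add_self

/-- The dyadic layer-cake bound behind the inclusion of weak `L^m` in `L^τ`. -/
theorem upperLIntegral_rpow_le_of_measure_ge_le {A : ℝ≥0∞} {m τ : ℝ} (hτ : 0 ≤ τ)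
    (hf : ∀ j : ℕ, μ {a | 2 ^ j ≤ f a} ≤ A * (2 ^ j) ^ (-m)) :
    upperLIntegral μ (fun a => f a ^ τ) ≤
      μ univ + A * (2 ^ τ * (1 - 2 ^ (τ - m))⁻¹) := by
  let S : ℕ → Set α := fun j => toMeasurable μ {a | 2 ^ j ≤ f a}
  have hS : ∀ j, MeasurableSet (S j) := fun j => measurableSet_toMeasurable _ _
  let G : ℕ → α → ℝ≥0∞ := fun j => (S j).indicator fun _ => (2 ^ (j + 1)) ^ τ
  have hG : ∀ j, Measurable (G j) := fun j => measurable_const.indicator (hS j)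
  have h_majorant : (fun a => f a ^ τ) ≤ fun a => 1 + ∑' j, G j a := fun a =>
    (rpow_le_one_add_tsum_indicator_dyadic hτ (f a)).trans <| add_le_add_right
      (ENNReal.tsum_le_tsum fun j => indicator_le_indicator_of_subset
        (subset_toMeasurable μ {a | 2 ^ j ≤ f a}) (fun _ => zero_le) a) 1
  have h_geom : ∀ j : ℕ, ((2 : ℝ≥0∞) ^ (j + 1)) ^ τ * (A * (2 ^ j) ^ (-m)) =
      A * (2 ^ τ * (2 ^ (τ - m)) ^ j) := by
    intro j
    have h_pow : ((2 : ℝ≥0∞) ^ (τ - m)) ^ j = (2 ^ j) ^ τ * (2 ^ j) ^ (-m) := by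
      rw [sub_eq_add_neg, ← rpow_natCast, ← rpow_natCast, ← rpow_mul, ← rpow_mul, ← rpow_mul,
        ← rpow_add _ _ two_ne_zero ofNat_ne_top]
      ring_nf
    rw [h_pow, pow_succ, mul_rpow_of_nonneg _ _ hτ]
    ring
  calc upperLIntegral μ (fun a => f a ^ τ)
      ≤ ∫⁻ a, 1 + ∑' j, G j a ∂μ :=
        upperLIntegral_le_lintegral (measurable_const.add (.tsum hG)) h_majorant
    _ = μ univ + ∑' j : ℕ, (2 ^ (j + 1)) ^ τ * μ {a | 2 ^ j ≤ f a} := by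
        rw [lintegral_add_left measurable_const, lintegral_tsum fun j => (hG j).aemeasurable]
        simp only [G, S, lintegral_one, lintegral_indicator_const (hS _), measure_toMeasurable]
    _ ≤ μ univ + ∑' j : ℕ, (2 ^ (j + 1)) ^ τ * (A * (2 ^ j) ^ (-m)) := by
        gcongr with j
        exact hf j
    _ = μ univ + A * (2 ^ τ * (1 - 2 ^ (τ - m))⁻¹) := by
        simp only [h_geom, ENNReal.tsum_mul_left, tsum_geometric]

end UpperLIntegral

section Tonelli

variable {Z : Type*} [MeasurableSpace Z] {ρ : Measure Z}

theorem exists_mem_mul_measure_le_setLIntegral {H : Z → ℝ≥0∞} (hH : Measurable H) {s : Set Z}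
    (hs : s.Nonempty) (hρs : ρ s ≠ ⊤) : ∃ z ∈ s, H z * ρ s ≤ ∫⁻ z in s, H z ∂ρ := by
  rcases eq_or_ne (ρ s) 0 with hs₀ | hs₀
  · obtain ⟨z, hz⟩ := hs
    exact ⟨z, hz, by simp only [hs₀, mul_zero, zero_le]⟩
  · obtain ⟨z, hz, hle⟩ := exists_le_setLAverage hs₀ hρs hH.aemeasurable
    rw [setLAverage_eq, ENNReal.le_div_iff_mul_le (.inl hs₀) (.inl hρs)] at hle
    exact ⟨z, hz, hle⟩

theorem exists_nodes_lintegral_comp_le [Nonempty Z] [IsFiniteMeasure ρ] {H : Z → ℝ≥0∞}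
    (hH : Measurable H) {q : Z → ℕ} (hq : Measurable q) :
    ∃ w : ℕ → Z, (∀ z, q (w (q z)) = q z) ∧ ∫⁻ z, H (w (q z)) ∂ρ ≤ ∫⁻ z, H z ∂ρ := by
  have h_node : ∀ i, ∃ z, ((q ⁻¹' {i}).Nonempty → q z = i) ∧
      H z * ρ (q ⁻¹' {i}) ≤ ∫⁻ z in q ⁻¹' {i}, H z ∂ρ := by
    intro i
    rcases (q ⁻¹' {i}).eq_empty_or_nonempty with h_empty | hne
    · simp [h_empty]
    · obtain ⟨z, hz, hle⟩ := exists_mem_mul_measure_le_setLIntegral hH hne (measure_ne_top ρ _)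
      exact ⟨z, fun _ => hz, hle⟩
  choose w hqw hw using h_node
  have hq_fiber : ∀ i, MeasurableSet (q ⁻¹' {i}) := fun i => hq (measurableSet_singleton i)
  refine ⟨w, fun z => hqw (q z) ⟨z, rfl⟩, ?_⟩
  calc ∫⁻ z, H (w (q z)) ∂ρ = ∑' i, H (w i) * ρ (q ⁻¹' {i}) := by
        rw [← lintegral_map (measurable_from_nat (f := fun i => H (w i))) hq, lintegral_countable']
        simp only [Measure.map_apply hq (measurableSet_singleton _)]
    _ ≤ ∑' i, ∫⁻ z in q ⁻¹' {i}, H z ∂ρ := ENNReal.tsum_le_tsum hw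
    _ = ∫⁻ z, H z ∂ρ := by
        rw [← lintegral_iUnion hq_fiber (pairwise_disjoint_fiber q), ← preimage_iUnion,
          iUnion_of_singleton, preimage_univ, setLIntegral_univ]

variable [PseudoMetricSpace Z] [SecondCountableTopology Z] [OpensMeasurableSpace Z]

theorem exists_measurable_nat_fiber_dist_lt {ε : ℝ} (hε : 0 < ε) :
    ∃ q : Z → ℕ, Measurable q ∧ ∀ z z', q z = q z' → dist z z' < ε := by
  classical
  rcases isEmpty_or_nonempty Z with _ | _
  · exact ⟨fun _ => 0, measurable_const, isEmptyElim⟩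
  have h_dense : ∀ z : Z, ∃ k, dist z (TopologicalSpace.denseSeq Z k) < ε / 2 := fun z => by
    simpa only [exists_range_iff] using
      (TopologicalSpace.denseRange_denseSeq Z).exists_dist_lt z (half_pos hε)
  refine ⟨fun z => Nat.find (h_dense z),
    measurable_find h_dense fun k =>
      (isOpen_ball (x := TopologicalSpace.denseSeq Z k)).measurableSet, fun z z' h => ?_⟩
  have hz := Nat.find_spec (h_dense z)
  have hz' := Nat.find_spec (h_dense z')
  rw [← (show Nat.find (h_dense z) = Nat.find (h_dense z') from h)] at hz'
  linarith [dist_triangle_right z z' (TopologicalSpace.denseSeq Z (Nat.find (h_dense z)))]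

theorem upperLIntegral_lintegral_le {α : Type*} [MeasurableSpace α] (μ : Measure α)
    [IsFiniteMeasure ρ] {F : α → Z → ℝ≥0∞} (hF : ∀ a, LowerSemicontinuous (F a)) :
    upperLIntegral μ (fun a => ∫⁻ z, F a z ∂ρ) ≤
      upperLIntegral ρ (fun z => upperLIntegral μ (F · z)) := by
  rcases isEmpty_or_nonempty Z with _ | _
  · refine (upperLIntegral_le_lintegral measurable_zero fun a => ?_).trans (by simp)
    simp
  obtain ⟨H, hH, hH_ge, hH_eq⟩ :=
    exists_measurable_ge_lintegral_eq_upperLIntegral ρ fun z => upperLIntegral μ (F · z)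
  choose q hq hq_fiber using fun n : ℕ =>
    exists_measurable_nat_fiber_dist_lt (Z := Z) (Nat.one_div_pos_of_nat (α := ℝ) (n := n))
  choose w hqw hw_le using fun n => exists_nodes_lintegral_comp_le (ρ := ρ) hH (hq n)
  have h_nodes : ∀ z, Tendsto (fun n => w n (q n z)) atTop (𝓝 z) := fun z =>
    tendsto_iff_dist_tendsto_zero.2 <| squeeze_zero (fun _ => dist_nonneg)
      (fun n => (hq_fiber n _ _ (hqw n z)).le) tendsto_one_div_add_atTop_nhds_zero_nat
  have h_fatou : ∀ a, ∫⁻ z, F a z ∂ρ ≤ liminf (fun n => ∫⁻ z, F a (w n (q n z)) ∂ρ) atTop :=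
    fun a => calc
      ∫⁻ z, F a z ∂ρ ≤ ∫⁻ z, liminf (fun n => F a (w n (q n z))) atTop ∂ρ :=
        lintegral_mono fun z => ((hF a).le_liminf z).trans (h_nodes z).liminf_le_liminf_comp
      _ ≤ _ := lintegral_liminf_le fun n =>
        (measurable_from_nat (f := fun i => F a (w n i))).comp (hq n)
  have h_approx : ∀ n, upperLIntegral μ (fun a => ∫⁻ z, F a (w n (q n z)) ∂ρ) ≤
      upperLIntegral ρ (fun z => upperLIntegral μ (F · z)) := fun n => calc
    upperLIntegral μ (fun a => ∫⁻ z, F a (w n (q n z)) ∂ρ)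
        = upperLIntegral μ (fun a => ∫⁻ i, F a (w n i) ∂(ρ.map (q n))) := by
          simp only [lintegral_map measurable_from_nat (hq n)]
      _ ≤ ∫⁻ i, upperLIntegral μ (F · (w n i)) ∂(ρ.map (q n)) :=
          upperLIntegral_lintegral_le_of_countable μ _ _
      _ ≤ ∫⁻ i, H (w n i) ∂(ρ.map (q n)) := lintegral_mono fun i => hH_ge (w n i)
      _ = ∫⁻ z, H (w n (q n z)) ∂ρ := lintegral_map measurable_from_nat (hq n)
      _ ≤ upperLIntegral ρ (fun z => upperLIntegral μ (F · z)) := hH_eq ▸ hw_le n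
  calc upperLIntegral μ (fun a => ∫⁻ z, F a z ∂ρ)
      ≤ upperLIntegral μ (fun a => liminf (fun n => ∫⁻ z, F a (w n (q n z)) ∂ρ) atTop) :=
        upperLIntegral_mono h_fatou
    _ ≤ liminf (fun n => upperLIntegral μ (fun a => ∫⁻ z, F a (w n (q n z)) ∂ρ)) atTop :=
        upperLIntegral_liminf_le _
    _ ≤ liminf (fun _ => upperLIntegral ρ (fun z => upperLIntegral μ (F · z))) atTop :=
        liminf_le_liminf (Eventually.of_forall h_approx)
    _ = upperLIntegral ρ (fun z => upperLIntegral μ (F · z)) := liminf_const _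

end Tonelli

section Dimension

/-- The Riesz `τ`-potential of a measure, whose integral is the `τ`-energy. -/
noncomputable def rieszPotential {X : Type*} [EMetricSpace X] [MeasurableSpace X]
    (τ : ℝ) (ν : Measure X) (x : X) : ℝ≥0∞ :=
  ∫⁻ y, edist x y ^ (-τ) ∂ν

variable {X : Type*} [EMetricSpace X] [MeasurableSpace X] [BorelSpace X] {ν : Measure X} {τ : ℝ}

theorem lowerSemicontinuous_rieszPotential : LowerSemicontinuous (rieszPotential τ ν) := by
  refine lowerSemicontinuous_iff_le_liminf.2 fun x => ?_
  have h_kernel : ∀ y, Tendsto (fun z => edist z y ^ (-τ)) (𝓝 x) (𝓝 (edist x y ^ (-τ))) :=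
    fun y => (continuous_rpow_const.comp (continuous_id.edist continuous_const)).tendsto x
  calc rieszPotential τ ν x = ∫⁻ y, liminf (fun z => edist z y ^ (-τ)) (𝓝 x) ∂ν :=
        lintegral_congr fun y => (h_kernel y).liminf_eq.symm
    _ ≤ liminf (rieszPotential τ ν) (𝓝 x) := lintegral_liminf_le fun z =>
        (continuous_rpow_const.comp (continuous_const.edist continuous_id)).measurable

theorem measure_le_rieszPotential_mul_ediam_rpow (hτ : 0 ≤ τ) {x : X} {s : Set X} (hx : x ∈ s)
    (hs : ediam s ≠ ⊤) (hν : rieszPotential τ ν x ≠ ⊤) :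
    ν s ≤ rieszPotential τ ν x * ediam s ^ τ := by
  have h_subset : s ⊆ {y | ediam s ^ (-τ) ≤ edist x y ^ (-τ)} := by
    intro y hy
    rw [mem_ofPred_eq, rpow_neg, rpow_neg]
    gcongr
    exact edist_le_ediam_of_mem hx hy
  have h_markov : ediam s ^ (-τ) * ν s ≤ rieszPotential τ ν x :=
    (mul_le_mul_right (measure_mono h_subset) _).trans <| mul_meas_ge_le_lintegral
      (continuous_rpow_const.comp (continuous_const.edist continuous_id)).measurable _
  rwa [rpow_neg, mul_comm, ← div_eq_mul_inv, ENNReal.div_le_iff_le_mul (.inr hν)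
    (.inl (rpow_ne_top_of_nonneg hτ hs))] at h_markov

theorem inv_smul_restrict_le_hausdorffMeasure (hτ : 0 ≤ τ) {B : Set X} (hB : MeasurableSet B)
    {K : ℝ≥0∞} (hK₀ : K ≠ 0) (hK : K ≠ ⊤) (hBK : ∀ x ∈ B, rieszPotential τ ν x ≤ K) :
    K⁻¹ • ν.restrict B ≤ μH[τ] := by
  refine Measure.le_hausdorffMeasure τ _ 1 one_pos fun s hs => ?_
  rw [Measure.smul_apply, smul_eq_mul, ENNReal.inv_mul_le_iff hK₀ hK, Measure.restrict_apply' hB]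
  rcases (s ∩ B).eq_empty_or_nonempty with h_empty | ⟨x, hx⟩
  · simp [h_empty]
  have h_diam : ediam (s ∩ B) ≤ ediam s := ediam_mono inter_subset_left
  calc ν (s ∩ B) ≤ rieszPotential τ ν x * ediam (s ∩ B) ^ τ :=
        measure_le_rieszPotential_mul_ediam_rpow hτ hx
          (ne_top_of_le_ne_top one_ne_top (h_diam.trans hs)) (ne_top_of_le_ne_top hK (hBK x hx.2))
    _ ≤ K * ediam s ^ τ := by
        gcongr
        exact hBK x hx.2

theorem le_dimH_of_sEnergy_ne_top (hτ : 0 ≤ τ) (hν : sEnergy τ ν ≠ ⊤) {S : Set X}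
    (hS : ν S ≠ 0) : ENNReal.ofReal τ ≤ dimH S := by
  have h_meas : Measurable (rieszPotential τ ν) := lowerSemicontinuous_rieszPotential.measurable
  let B : ℕ → Set X := fun k => {x | rieszPotential τ ν x ≤ k + 1}
  have hB : ∀ k, MeasurableSet (B k) := fun k => h_meas measurableSet_Iic
  have h_cover : S ≤ᵐ[ν] ⋃ k, S ∩ B k := by
    filter_upwards [ae_lt_top h_meas hν] with x hx_lt hxS
    obtain ⟨k, hk⟩ := ENNReal.exists_nat_gt hx_lt.ne
    exact mem_iUnion.2 ⟨k, hxS, hk.le.trans le_self_add⟩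
  obtain ⟨k, hk⟩ : ∃ k, 0 < ν (S ∩ B k) := exists_measure_pos_of_not_measure_iUnion_null fun h =>
    hS (measure_mono_null_ae h_cover h)
  have h_le : (k + 1 : ℝ≥0∞)⁻¹ * ν (S ∩ B k) ≤ μH[τ] S := by
    simpa only [Measure.smul_apply, smul_eq_mul, Measure.restrict_apply' (hB k)] using
      inv_smul_restrict_le_hausdorffMeasure (K := k + 1) hτ (hB k) (by simp) (by simp)
        (fun x hx => hx) S
  refine le_dimH_of_hausdorffMeasure_ne_zero (d := τ.toNNReal) ?_
  rw [Real.coe_toNNReal τ hτ]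
  exact ((ENNReal.mul_pos (by simp) hk.ne').trans_le h_le).ne'

end Dimension

section Transversal

theorem sEnergy_map_le_lintegral {V X : Type*} [MeasurableSpace V] [EMetricSpace X]
    [MeasurableSpace X] (τ : ℝ) (f : V → X) (μ : Measure V) :
    sEnergy τ (μ.map f) ≤ ∫⁻ x, ∫⁻ y, edist (f x) (f y) ^ (-τ) ∂μ ∂μ :=
  (lintegral_map_le _ _).trans (lintegral_mono fun _ => lintegral_map_le _ _)

/-- The family `π α`, with `α` distributed according to `ψ`, is `m`-transversal on `Ω`: distances
within `Ω` are contracted by a factor at most `δ` only on a set of parameters of measure at most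
`c * δ ^ m`, for every `δ ≤ δ₀`. -/
def IsTransversal {ι V X : Type*} [MeasurableSpace ι] [PseudoMetricSpace V] [PseudoMetricSpace X]
    (ψ : Measure ι) (π : ι → V → X) (Ω : Set V) (m c δ₀ : ℝ) : Prop :=
  ∀ x ∈ Ω, ∀ y ∈ Ω, x ≠ y → ∀ δ : ℝ, 0 < δ → δ ≤ δ₀ →
    ψ {α | dist (π α x) (π α y) ≤ δ * dist x y} ≤ ENNReal.ofReal (c * δ ^ m)

variable {ι V X : Type*} [MeasurableSpace ι] [MetricSpace V] {ψ : Measure ι} {π : ι → V → X}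
  {Ω : Set V} {m c δ₀ τ : ℝ}

theorem IsTransversal.measure_le_div_edist_le [PseudoMetricSpace X]
    (h : IsTransversal ψ π Ω m c δ₀) (hδ₀ : 0 < δ₀) {x y : V} (hx : x ∈ Ω) (hy : y ∈ Ω)
    (hxy : x ≠ y) {t : ℝ} (ht : 1 ≤ t) :
    ψ {α | ENNReal.ofReal t ≤ ENNReal.ofReal δ₀ * edist x y / edist (π α x) (π α y)} ≤
      ENNReal.ofReal (c * δ₀ ^ m) * ENNReal.ofReal t ^ (-m) := by
  have ht₀ : 0 < t := one_pos.trans_le ht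
  have h_radius : 0 < δ₀ * dist x y := mul_pos hδ₀ (dist_pos.2 hxy)
  have h_set : {α | ENNReal.ofReal t ≤ ENNReal.ofReal δ₀ * edist x y / edist (π α x) (π α y)} =
      {α | dist (π α x) (π α y) ≤ δ₀ / t * dist x y} := by
    ext α
    rw [mem_ofPred_eq, mem_ofPred_eq, edist_dist, edist_dist, ← ofReal_mul hδ₀.le,
      ENNReal.le_div_iff_mul_le (.inr (ofReal_pos.2 h_radius).ne') (.inl ofReal_ne_top),
      ← ofReal_mul ht₀.le, ofReal_le_ofReal_iff h_radius.le, div_mul_eq_mul_div, le_div_iff₀' ht₀]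
  calc _ ≤ ENNReal.ofReal (c * (δ₀ / t) ^ m) := h_set ▸
        h x hx y hy hxy (δ₀ / t) (div_pos hδ₀ ht₀) (div_le_self hδ₀.le ht)
    _ = ENNReal.ofReal (c * δ₀ ^ m) * ENNReal.ofReal t ^ (-m) := by
        rw [ofReal_rpow_of_pos ht₀, ← ofReal_mul' (by positivity), Real.div_rpow hδ₀.le ht₀.le,
          Real.rpow_neg ht₀.le, mul_div_assoc', div_eq_mul_inv]

theorem IsTransversal.upperLIntegral_edist_rpow_neg_le [PseudoMetricSpace X]
    (h : IsTransversal ψ π Ω m c δ₀) (hδ₀ : 0 < δ₀) (hτ : 0 ≤ τ) {x y : V} (hx : x ∈ Ω)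
    (hy : y ∈ Ω) (hxy : x ≠ y) :
    upperLIntegral ψ (fun α => edist (π α x) (π α y) ^ (-τ)) ≤
      ENNReal.ofReal δ₀ ^ (-τ) *
        (ψ univ + ENNReal.ofReal (c * δ₀ ^ m) * (2 ^ τ * (1 - 2 ^ (τ - m))⁻¹)) *
          edist x y ^ (-τ) := by
  set R : ℝ≥0∞ := ENNReal.ofReal δ₀ * edist x y
  have hR₀ : R ≠ 0 := mul_ne_zero (ofReal_pos.2 hδ₀).ne' (edist_pos.2 hxy).ne'
  have hR_top : R ≠ ⊤ := mul_ne_top ofReal_ne_top (edist_ne_top x y)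
  have hR_rpow : R ^ (-τ) = ENNReal.ofReal δ₀ ^ (-τ) * edist x y ^ (-τ) :=
    mul_rpow_of_ne_top ofReal_ne_top (edist_ne_top x y) _
  have h_scale : ∀ α, edist (π α x) (π α y) ^ (-τ) =
      R ^ (-τ) * (R / edist (π α x) (π α y)) ^ τ := by
    intro α
    rw [div_rpow_of_nonneg _ _ hτ, div_eq_mul_inv, ← rpow_neg, ← mul_assoc,
      ← rpow_add _ _ hR₀ hR_top, neg_add_cancel, rpow_zero, one_mul]
  have h_weak : ∀ j : ℕ, ψ {α | 2 ^ j ≤ R / edist (π α x) (π α y)} ≤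
      ENNReal.ofReal (c * δ₀ ^ m) * (2 ^ j) ^ (-m) := by
    intro j
    simpa [ofReal_pow] using
      h.measure_le_div_edist_le hδ₀ hx hy hxy (one_le_pow₀ (n := j) one_le_two)
  calc upperLIntegral ψ (fun α => edist (π α x) (π α y) ^ (-τ))
      = upperLIntegral ψ (fun α => R ^ (-τ) * (R / edist (π α x) (π α y)) ^ τ) := by
        simp only [← h_scale]
    _ ≤ R ^ (-τ) * upperLIntegral ψ (fun α => (R / edist (π α x) (π α y)) ^ τ) :=
        upperLIntegral_const_mul_le _ _
    _ ≤ R ^ (-τ) * (ψ univ + ENNReal.ofReal (c * δ₀ ^ m) * (2 ^ τ * (1 - 2 ^ (τ - m))⁻¹)) := by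
        gcongr
        exact upperLIntegral_rpow_le_of_measure_ge_le hτ h_weak
    _ = _ := by rw [hR_rpow, mul_right_comm]

theorem IsTransversal.exists_upperLIntegral_edist_rpow_neg_le [PseudoMetricSpace X]
    [IsFiniteMeasure ψ] (h : IsTransversal ψ π Ω m c δ₀) (hδ₀ : 0 < δ₀) (hτ : 0 < τ)
    (hτm : τ < m) :
    ∃ C : ℝ≥0∞, C ≠ ⊤ ∧ ∀ x ∈ Ω, ∀ y ∈ Ω,
      upperLIntegral ψ (fun α => edist (π α x) (π α y) ^ (-τ)) ≤ C * edist x y ^ (-τ) := by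
  set C₀ : ℝ≥0∞ := ENNReal.ofReal δ₀ ^ (-τ) *
    (ψ univ + ENNReal.ofReal (c * δ₀ ^ m) * (2 ^ τ * (1 - 2 ^ (τ - m))⁻¹))
  have h_ratio : (2 : ℝ≥0∞) ^ (τ - m) < 1 :=
    rpow_lt_one_of_one_lt_of_neg one_lt_two (sub_neg.2 hτm)
  have hC₀_top : C₀ ≠ ⊤ := by
    refine mul_ne_top (rpow_ne_top_of_ne_zero (ofReal_pos.2 hδ₀).ne' ofReal_ne_top) ?_
    refine add_ne_top.2 ⟨measure_ne_top ψ _, mul_ne_top ofReal_ne_top (mul_ne_top ?_ ?_)⟩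
    · exact rpow_ne_top_of_nonneg hτ.le ofNat_ne_top
    · exact inv_ne_top.2 (tsub_pos_of_lt h_ratio).ne'
  -- The summand `1` keeps the bound true on the diagonal, where it has to be infinite.
  refine ⟨C₀ + 1, add_ne_top.2 ⟨hC₀_top, one_ne_top⟩, fun x hx y hy => ?_⟩
  rcases eq_or_ne x y with rfl | hxy
  · simp [zero_rpow_of_neg (neg_neg_of_pos hτ)]
  · exact (h.upperLIntegral_edist_rpow_neg_le hδ₀ hτ.le hx hy hxy).trans
      (mul_le_mul_left le_self_add _)

variable [SecondCountableTopology V] [MeasurableSpace V] [BorelSpace V] {μ : Measure V}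
  [IsFiniteMeasure μ] [MetricSpace X] [MeasurableSpace X]

theorem IsTransversal.ae_sEnergy_map_lt_top [IsFiniteMeasure ψ]
    (h : IsTransversal ψ π Ω m c δ₀) (hδ₀ : 0 < δ₀) (hτ : 0 < τ) (hτm : τ < m)
    (hπ : ∀ α, Continuous (π α)) (hΩ : ∀ᵐ x ∂μ, x ∈ Ω) (hμ : sEnergy τ μ ≠ ⊤) :
    ∀ᵐ α ∂ψ, sEnergy τ (μ.map (π α)) < ⊤ := by
  obtain ⟨C, hC, h_le⟩ := h.exists_upperLIntegral_edist_rpow_neg_le hδ₀ hτ hτm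
  have h_cont : ∀ α, Continuous fun p : V × V => edist (π α p.1) (π α p.2) ^ (-τ) := fun α =>
    continuous_rpow_const.comp (((hπ α).comp continuous_fst).edist ((hπ α).comp continuous_snd))
  have h_meas : Measurable fun p : V × V => edist p.1 p.2 ^ (-τ) :=
    (continuous_rpow_const.comp continuous_edist).measurable
  have hΩΩ : ∀ᵐ p ∂μ.prod μ, p.1 ∈ Ω ∧ p.2 ∈ Ω :=
    (Measure.quasiMeasurePreserving_fst.ae hΩ).and (Measure.quasiMeasurePreserving_snd.ae hΩ)
  have h_average : upperLIntegral ψ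
      (fun α => ∫⁻ p, edist (π α p.1) (π α p.2) ^ (-τ) ∂μ.prod μ) ≤ C * sEnergy τ μ := calc
    _ ≤ upperLIntegral (μ.prod μ)
          (fun p => upperLIntegral ψ (fun α => edist (π α p.1) (π α p.2) ^ (-τ))) :=
        upperLIntegral_lintegral_le ψ fun α => (h_cont α).lowerSemicontinuous
    _ ≤ ∫⁻ p, C * edist p.1 p.2 ^ (-τ) ∂μ.prod μ :=
        upperLIntegral_le_lintegral_of_ae_le (h_meas.const_mul C) <|
          hΩΩ.mono fun p hp => h_le p.1 hp.1 p.2 hp.2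
    _ = C * sEnergy τ μ := by
        rw [lintegral_const_mul C h_meas, lintegral_prod _ h_meas.aemeasurable, sEnergy]
  filter_upwards [ae_lt_top_of_upperLIntegral_ne_top
    (ne_top_of_le_ne_top (mul_ne_top hC hμ) h_average)] with α hα
  rw [lintegral_prod _ (h_cont α).measurable.aemeasurable] at hα
  exact (sEnergy_map_le_lintegral τ (π α) μ).trans_lt hα

end Transversal

theorem marstrand_transversal_general {ι V X : Type*} [MeasurableSpace ι] [MetricSpace V]
    [SecondCountableTopology V] [MeasurableSpace V] [BorelSpace V] [MetricSpace X]
    [MeasurableSpace X] [BorelSpace X] {ψ : Measure ι} [IsFiniteMeasure ψ] {π : ι → V → X}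
    (hπ : ∀ α, Continuous (π α)) {Ω : Set V} {m c δ₀ τ : ℝ} (hδ₀ : 0 < δ₀) (hτ : 0 < τ)
    (hτm : τ < m) (htrans : IsTransversal ψ π Ω m c δ₀) {μ : Measure V} [IsFiniteMeasure μ]
    (hΩ : ∀ᵐ x ∂μ, x ∈ Ω) (hμ : sEnergy τ μ ≠ ⊤) :
    (∀ᵐ α ∂ψ, sEnergy τ (μ.map (π α)) < ⊤) ∧
      ∀ᵐ α ∂ψ, ∀ E : Set V, μ E ≠ 0 → ENNReal.ofReal τ ≤ dimH (π α '' E) := by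
  have h_energy := htrans.ae_sEnergy_map_lt_top hδ₀ hτ hτm hπ hΩ hμ
  refine ⟨h_energy, h_energy.mono fun α hα E hE => ?_⟩
  refine le_dimH_of_sEnergy_ne_top hτ.le hα.ne fun h_null => hE ?_
  refine measure_mono_null (subset_preimage_image (π α) E) (nonpos_iff_eq_zero.1 ?_)
  exact (Measure.le_map_apply (hπ α).measurable.aemeasurable _).trans h_null.le

/-- nonlinear Marstrand-type theorem. For an `m`-transversal family
of projections, a measure of finite `τ`-energy (`τ < m`) pushes forward to a
measure of finite `τ`-energy for a.e. parameter; hence a.e. projection of `E`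
has Hausdorff dimension at least `τ`. -/
theorem marstrand_transversal
    {ι X : Type*} [MeasurableSpace ι] [TopologicalSpace ι] [MetricSpace X] [MeasurableSpace X] [BorelSpace X]
    (n : ℕ) (Ω : Set (EuclideanSpace ℝ (Fin n)))
    (ψ : Measure ι) [IsProbabilityMeasure ψ]
    (π : ι → EuclideanSpace ℝ (Fin n) → X)
    (hπmeas : ∀ α, Measurable (π α))
    (hπcont : Continuous fun q : EuclideanSpace ℝ (Fin n) × ι => π q.2 q.1)
    (m c δ₀ τ : ℝ) (hm : 0 < m) (hc : 0 < c) (hδ₀ : 0 < δ₀) (hτ : 0 < τ) (hτm : τ < m)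
    (htrans : ∀ x ∈ Ω, ∀ y ∈ Ω, x ≠ y → ∀ δ : ℝ, 0 < δ → δ ≤ δ₀ →
      ψ {α | dist (π α x) (π α y) ≤ δ * dist x y} ≤ ENNReal.ofReal (c * δ ^ m))
    (E : Set (EuclideanSpace ℝ (Fin n))) (hE : MeasurableSet E) (hEΩ : E ⊆ Ω)
    (μ : Measure (EuclideanSpace ℝ (Fin n))) [IsProbabilityMeasure μ]
    (hμE : μ E = 1) (henergy : sEnergy τ μ ≠ ⊤) :
    (∀ᵐ α ∂ψ, sEnergy τ (Measure.map (π α) μ) < ⊤) ∧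
    (∀ᵐ α ∂ψ, ENNReal.ofReal τ ≤ dimH (π α '' E)) := by
  have hE_ae : ∀ᵐ x ∂μ, x ∈ E := (mem_ae_iff_prob_eq_one hE).2 hμE
  have h_general := marstrand_transversal_general
    (fun α => hπcont.comp (continuous_id.prodMk continuous_const)) hδ₀ hτ hτm htrans
    (hE_ae.mono fun _ hx => hEΩ hx) henergy
  exact ⟨h_general.1, h_general.2.mono fun α hα => hα E (by simp [hμE])⟩
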